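/- Let K be a field of characteristic zero, A a Lie-admissible K-algebra, i.e. Σ_{σ∈Σ₃} ε(σ) A_μ(x_{σ⁻¹(1)}, x_{σ⁻¹(2)}, x_{σ⁻¹(3)}) = 0 for all x₁,x₂,x₃ ∈ A, and B an associative K-algebra whose triple products are totally symmetric: y₁·y₂·y₃ = y_{σ(1)}·y_{σ(2)}·y_{σ(3)} for all y₁,y₂,y₃ ∈ B and all σ ∈ Σ₃. Then the tensor product A⊗B, with multiplication (a₁⊗b₁)·(a₂⊗b₂) = (a₁·a₂)⊗(b₁·b₂), is Lie-admissible: Σ_{σ∈Σ₃} ε(σ) A_μ(u_{σ⁻¹(1)}, u_{σ⁻¹(2)}, u_{σ⁻¹(3)}) = 0 for all u₁,u₂,u₃ ∈ A⊗B. -/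

import Mathlib

open TensorProduct

/-!
On pure tensors the associator of `A ⊗ B` factors as `associator a₁ a₂ a₃ ⊗ b₁b₂b₃`, because `B` is
associative. The second factor is invariant under permutations, so alternating the associator of
`A ⊗ B` only alternates the first factor, and the result vanishes since `A` is Lie-admissible. The
alternating sum is multilinear, and pure tensors span `A ⊗ B`.
-/

section TensorPower

open MultilinearMap

variable {R ι : Type*} [CommSemiring R]

theorem multilinearMap_ext_tmul [Finite ι] {M N : ι → Type*} {P : Type*}
    [∀ i, AddCommMonoid (M i)] [∀ i, Module R (M i)] [∀ i, AddCommMonoid (N i)]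
    [∀ i, Module R (N i)] [AddCommMonoid P] [Module R P]
    {f g : MultilinearMap R (fun i ↦ M i ⊗[R] N i) P}
    (h : ∀ (m : ∀ i, M i) (n : ∀ i, N i),
      f (fun i ↦ m i ⊗ₜ[R] n i) = g (fun i ↦ m i ⊗ₜ[R] n i)) :
    f = g := by
  refine MultilinearMap.ext_of_span_eq_top (γ := fun i ↦ M i × N i)
    (g := fun _ p ↦ p.1 ⊗ₜ[R] p.2) (fun i ↦ ?_) fun p ↦ h (fun i ↦ (p i).1) fun i ↦ (p i).2
  simpa only [Set.range, Prod.exists] using span_tmul_eq_top R (M i) (N i)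

variable [Fintype ι] [DecidableEq ι] {M N M' N' : Type*}
  [AddCommMonoid M] [Module R M] [AddCommMonoid N] [Module R N]
  [AddCommGroup M'] [Module R M'] [AddCommMonoid N'] [Module R N']
  {F : MultilinearMap R (fun _ : ι ↦ M ⊗[R] N) (M' ⊗[R] N')}
  {f : MultilinearMap R (fun _ : ι ↦ M) M'} {g : (ι → N) → N'}

theorem alternatization_apply_tmul
    (hF : ∀ m n, F (fun i ↦ m i ⊗ₜ[R] n i) = f m ⊗ₜ[R] g n)
    (hg : ∀ (n : ι → N) (σ : Equiv.Perm ι), g (n ∘ σ) = g n) (m : ι → M) (n : ι → N) :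
    alternatization F (fun i ↦ m i ⊗ₜ[R] n i) = alternatization f m ⊗ₜ[R] g n := by
  simp only [alternatization_apply, sum_tmul, domDomCongr_apply]
  refine Finset.sum_congr rfl fun σ _ ↦ ?_
  calc Equiv.Perm.sign σ • F (fun i ↦ m (σ i) ⊗ₜ[R] n (σ i))
      = Equiv.Perm.sign σ • (f (m ∘ σ) ⊗ₜ[R] g (n ∘ σ)) := congrArg _ (hF (m ∘ σ) (n ∘ σ))
    _ = (Equiv.Perm.sign σ • f (m ∘ σ)) ⊗ₜ[R] g n := by
      rw [hg, Units.smul_def, Units.smul_def, smul_tmul']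

theorem alternatization_eq_zero_of_tmul
    (hF : ∀ m n, F (fun i ↦ m i ⊗ₜ[R] n i) = f m ⊗ₜ[R] g n)
    (hg : ∀ (n : ι → N) (σ : Equiv.Perm ι), g (n ∘ σ) = g n) (hf : alternatization f = 0) :
    alternatization F = 0 := by
  apply AlternatingMap.coe_multilinearMap_injective
  refine multilinearMap_ext_tmul fun m n ↦ ?_
  calc alternatization F (fun i ↦ m i ⊗ₜ[R] n i)
      = alternatization f m ⊗ₜ[R] g n := alternatization_apply_tmul hF hg m n
    _ = 0 := by rw [hf, AlternatingMap.zero_apply, zero_tmul]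

end TensorPower

section Associator

variable (R A : Type*) [CommSemiring R] [NonUnitalNonAssocRing A] [Module R A]
  [SMulCommClass R A A] [IsScalarTower R A A]

/-- The associator of a nonassociative algebra as a multilinear map in three variables, so that its
`MultilinearMap.alternatization` is the left-hand side of the Lie-admissibility identity. -/
def associatorMultilinear : MultilinearMap R (fun _ : Fin 3 ↦ A) A :=
  .mk' (fun x ↦ associator (x 0) (x 1) (x 2))
    (fun x i a b ↦ by
      fin_cases i <;> simp [associator_apply, add_mul, mul_add, add_sub_add_comm])
    (fun x i r a ↦ by
      fin_cases i <;> simp [associator_apply, smul_mul_assoc, mul_smul_comm, smul_sub])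

variable {A}

@[simp]
theorem associatorMultilinear_apply (x : Fin 3 → A) :
    associatorMultilinear R A x = associator (x 0) (x 1) (x 2) :=
  rfl

theorem alternatization_associatorMultilinear_apply (x : Fin 3 → A) :
    MultilinearMap.alternatization (associatorMultilinear R A) x =
      ∑ σ : Equiv.Perm (Fin 3), (Equiv.Perm.sign σ : ℤ) •
        associator (x (σ⁻¹ 0)) (x (σ⁻¹ 1)) (x (σ⁻¹ 2)) := by
  rw [MultilinearMap.alternatization_apply, ← Equiv.sum_comp (Equiv.inv (Equiv.Perm (Fin 3)))]
  simp only [Equiv.inv_apply, Equiv.Perm.sign_inv, MultilinearMap.domDomCongr_apply,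
    associatorMultilinear_apply, Units.smul_def]

variable {B : Type*} [NonUnitalSemiring B] [Module R B] [SMulCommClass R B B] [IsScalarTower R B B]

theorem associator_tmul (a₁ a₂ a₃ : A) (b₁ b₂ b₃ : B) :
    associator (a₁ ⊗ₜ[R] b₁) (a₂ ⊗ₜ[R] b₂) (a₃ ⊗ₜ[R] b₃) =
      associator a₁ a₂ a₃ ⊗ₜ[R] (b₁ * b₂ * b₃) := by
  simp only [associator_apply, Algebra.TensorProduct.tmul_mul_tmul, mul_assoc b₁, sub_tmul]

end Associator

theorem tensor_lie_admissible_with_g6_shriek_general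
    (K : Type*) [CommSemiring K]
    (A : Type*) [NonUnitalNonAssocRing A] [Module K A]
    [SMulCommClass K A A] [IsScalarTower K A A]
    (B : Type*) [NonUnitalSemiring B] [Module K B]
    [SMulCommClass K B B] [IsScalarTower K B B]
    (hA : ∀ x : Fin 3 → A,
      ∑ σ : Equiv.Perm (Fin 3),
        (Equiv.Perm.sign σ : ℤ) •
          ((x (σ⁻¹ 0) * x (σ⁻¹ 1)) * x (σ⁻¹ 2)
            - x (σ⁻¹ 0) * (x (σ⁻¹ 1) * x (σ⁻¹ 2))) = 0)
    (hB : ∀ (y : Fin 3 → B) (σ : Equiv.Perm (Fin 3)),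
      y 0 * y 1 * y 2 = y (σ 0) * y (σ 1) * y (σ 2)) :
    ∀ u : Fin 3 → A ⊗[K] B,
      ∑ σ : Equiv.Perm (Fin 3),
        (Equiv.Perm.sign σ : ℤ) •
          ((u (σ⁻¹ 0) * u (σ⁻¹ 1)) * u (σ⁻¹ 2)
            - u (σ⁻¹ 0) * (u (σ⁻¹ 1) * u (σ⁻¹ 2))) = 0 := by
  have alternatization_A : (associatorMultilinear K A).alternatization = 0 := by
    ext x
    exact (alternatization_associatorMultilinear_apply K x).trans (hA x)
  have alternatization_tensor : (associatorMultilinear K (A ⊗[K] B)).alternatization = 0 :=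
    alternatization_eq_zero_of_tmul (f := associatorMultilinear K A) (g := fun b ↦ b 0 * b 1 * b 2)
      (fun _ _ ↦ associator_tmul K _ _ _ _ _ _) (fun b σ ↦ (hB b σ).symm) alternatization_A
  intro u
  exact (alternatization_associatorMultilinear_apply K u).symm.trans
    (DFunLike.congr_fun alternatization_tensor u)

/-- If `A` is a Lie-admissible algebra and `B` an associative algebra
whose triple products are totally symmetric (a `G₆^!`-algebra), then the tensor product
`A ⊗ B`, with multiplication `(a₁⊗b₁)·(a₂⊗b₂) = (a₁·a₂)⊗(b₁·b₂)`, is Lie-admissible. -/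
theorem tensor_lie_admissible_with_g6_shriek
    (K : Type*) [Field K] [CharZero K]
    (A : Type*) [NonUnitalNonAssocRing A] [Module K A]
    [SMulCommClass K A A] [IsScalarTower K A A]
    (B : Type*) [NonUnitalRing B] [Module K B]
    [SMulCommClass K B B] [IsScalarTower K B B]
    (hA : ∀ x : Fin 3 → A,
      ∑ σ : Equiv.Perm (Fin 3),
        (Equiv.Perm.sign σ : ℤ) •
          ((x (σ⁻¹ 0) * x (σ⁻¹ 1)) * x (σ⁻¹ 2)
            - x (σ⁻¹ 0) * (x (σ⁻¹ 1) * x (σ⁻¹ 2))) = 0)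
    (hB : ∀ (y : Fin 3 → B) (σ : Equiv.Perm (Fin 3)),
      y 0 * y 1 * y 2 = y (σ 0) * y (σ 1) * y (σ 2)) :
    ∀ u : Fin 3 → A ⊗[K] B,
      ∑ σ : Equiv.Perm (Fin 3),
        (Equiv.Perm.sign σ : ℤ) •
          ((u (σ⁻¹ 0) * u (σ⁻¹ 1)) * u (σ⁻¹ 2)
            - u (σ⁻¹ 0) * (u (σ⁻¹ 1) * u (σ⁻¹ 2))) = 0 :=
  tensor_lie_admissible_with_g6_shriek_general K A B hA hB
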